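/- Let L : B → A with right adjoint R : A → B (unit η, counit ε), and L' : B' → A with right adjoint R' : A → B' (unit η', counit ε'). Let G : B → B' be a functor with G ∘ R = R', and set ζ₁₁ := (ε' L) ∘ (L' G η) : L' ∘ G ⟶ L. If the unit η is a natural isomorphism, then the functor R L' : B' → B is left adjoint to G, with unit η' : id_{B'} ⟶ G ∘ (R L') (using G R L' = R' L') and counit η⁻¹ ∘ (R ζ₁₁) : (R L') ∘ G ⟶ id_B; that is, these two natural transformations satisfy the triangle identities for an adjunction R L' ⊣ G. -/

import Mathlib

open CategoryTheory

/-!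
The transformation `ζ₁₁ : L'G ⟶ L` is the mate of the identification `GR = R'`, and as such it
satisfies `ζ₁₁R ≫ ε = ε'` and `η'G ≫ R'ζ₁₁ = Gη`. Since `η⁻¹` is `Rε` on objects in the image of
`R`, the first identity turns the left triangle for `RL' ⊣ G` into `R` applied to the left triangle
for `L' ⊣ R'`. The second identity turns the right triangle into `Gη ≫ Gη⁻¹ = 𝟙`.
-/

section

variable {A B B' : Type*} [Category A] [Category B] [Category B']
  {L : B ⥤ A} {R : A ⥤ B} (adj : L ⊣ R)
  {L' : B' ⥤ A} {R' : A ⥤ B'} (adj' : L' ⊣ R') {G : B ⥤ B'}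

lemma inv_unit_app_obj (a : A) [IsIso (adj.unit.app (R.obj a))] :
    inv (adj.unit.app (R.obj a)) = R.map (adj.counit.app a) :=
  IsIso.inv_eq_of_hom_inv_id (adj.right_triangle_components a)

/-- The mate `G ⋙ L' ⟶ L` of a comparison `α : R ⋙ G ⟶ R'` of right adjoints, which is `ζ₁₁` when
`α` is the identification `R ⋙ G = R'`. It is encoded as `mateEquiv` for the square with fourth side
`𝟭 A`, with the unitors removed. -/
def leftMate (α : R ⋙ G ⟶ R') : G ⋙ L' ⟶ L :=
  ((mateEquiv adj adj').symm (.mk R (𝟭 A) G R' (α ≫ R'.leftUnitor.inv))).natTrans ≫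
    L.rightUnitor.hom

lemma leftMate_app (α : R ⋙ G ⟶ R') (X : B) :
    (leftMate adj adj' α).app X =
      L'.map (G.map (adj.unit.app X)) ≫ L'.map (α.app (L.obj X)) ≫
        adj'.counit.app (L.obj X) := by
  simp [leftMate]

lemma leftMate_app_comp_counit_app (α : R ⋙ G ⟶ R') (a : A) :
    (leftMate adj adj' α).app (R.obj a) ≫ adj.counit.app a =
      L'.map (α.app a) ≫ adj'.counit.app a := by
  simpa [leftMate] using
    (mateEquiv_counit_symm adj adj' (.mk R (𝟭 A) G R' (α ≫ R'.leftUnitor.inv)) a).symm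

lemma unit_app_comp_map_leftMate_app (α : R ⋙ G ⟶ R') (X : B) :
    adj'.unit.app (G.obj X) ≫ R'.map ((leftMate adj adj' α).app X) =
      G.map (adj.unit.app X) ≫ α.app (L.obj X) := by
  simp [leftMate]

/-- The adjunction `RL' ⊣ G` induced by an invertible unit of `L ⊣ R`. The equality `GR = R'` is
relaxed to an isomorphism `e`, so the unit is `η'` followed by `e⁻¹`, and the counit is built from
the mate of `e`. -/
noncomputable def adjunctionOfCompIso [IsIso adj.unit] (e : R ⋙ G ≅ R') : L' ⋙ R ⊣ G where
  unit := adj'.unit ≫ Functor.whiskerLeft L' e.inv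
  counit := Functor.whiskerRight (leftMate adj adj' e.hom) R ≫ inv adj.unit
  left_triangle_components Y := by
    have counit_after_unit : L'.map (adj'.unit.app Y ≫ e.inv.app (L'.obj Y)) ≫
        (leftMate adj adj' e.hom).app (R.obj (L'.obj Y)) ≫ adj.counit.app (L'.obj Y) =
          𝟙 (L'.obj Y) := by
      rw [leftMate_app_comp_counit_app, ← L'.map_comp_assoc]
      simp
    simpa [inv_unit_app_obj] using congrArg R.map counit_after_unit
  right_triangle_components X := by
    have naturality : R'.map ((leftMate adj adj' e.hom).app X) ≫ e.inv.app (L.obj X) =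
        e.inv.app (L'.obj (G.obj X)) ≫ G.map (R.map ((leftMate adj adj' e.hom).app X)) :=
      e.inv.naturality _
    calc
      (adj'.unit.app (G.obj X) ≫ e.inv.app (L'.obj (G.obj X))) ≫
            G.map (R.map ((leftMate adj adj' e.hom).app X) ≫ (inv adj.unit).app X)
        = (adj'.unit.app (G.obj X) ≫ R'.map ((leftMate adj adj' e.hom).app X)) ≫
            e.inv.app (L.obj X) ≫ G.map ((inv adj.unit).app X) := by
          simp only [Functor.map_comp, Category.assoc, reassoc_of% naturality]
      _ = G.map (adj.unit.app X) ≫ G.map ((inv adj.unit).app X) := by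
          rw [unit_app_comp_map_leftMate_app, Category.assoc, Iso.hom_inv_id_app_assoc]
      _ = 𝟙 (G.obj X) := by
          simp

end

theorem stmt2_general {A B B' : Type*} [Category A] [Category B] [Category B']
    {L : B ⥤ A} {R : A ⥤ B} (adj : L ⊣ R)
    {L' : B' ⥤ A} {R' : A ⥤ B'} (adj' : L' ⊣ R')
    {G : B ⥤ B'} (e : R ⋙ G ≅ R')
    [IsIso adj.unit]
    (ζ₁₁ : G ⋙ L' ⟶ L)
    (hζ : ∀ X : B, ζ₁₁.app X =
      L'.map (G.map (adj.unit.app X)) ≫ L'.map (e.hom.app (L.obj X)) ≫ adj'.counit.app (L.obj X))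
    (u : 𝟭 B' ⟶ (L' ⋙ R) ⋙ G)
    (hu : ∀ Y : B', u.app Y = adj'.unit.app Y ≫ e.inv.app (L'.obj Y))
    (c : G ⋙ (L' ⋙ R) ⟶ 𝟭 B)
    (hc : ∀ X : B, c.app X = R.map (ζ₁₁.app X) ≫ (inv adj.unit).app X) :
    (∀ Y : B', (L' ⋙ R).map (u.app Y) ≫ c.app ((L' ⋙ R).obj Y) = 𝟙 ((L' ⋙ R).obj Y)) ∧
    (∀ X : B, u.app (G.obj X) ≫ G.map (c.app X) = 𝟙 (G.obj X)) := by
  obtain rfl : ζ₁₁ = leftMate adj adj' e.hom := by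
    ext X
    rw [hζ, leftMate_app]
  obtain rfl : u = (adjunctionOfCompIso adj adj' e).unit := by
    ext Y
    exact hu Y
  obtain rfl : c = (adjunctionOfCompIso adj adj' e).counit := by
    ext X
    exact hc X
  exact ⟨(adjunctionOfCompIso adj adj' e).left_triangle_components,
    (adjunctionOfCompIso adj adj' e).right_triangle_components⟩

/-- Given adjunctions `L ⊣ R` (between `B` and `A`) and `L' ⊣ R'` (between `B'` and `A`),
and a functor `G : B ⥤ B'` with `G ∘ R = R'`, if the unit `η` of `L ⊣ R` is invertible then
`R ∘ L' : B' ⥤ B` is left adjoint to `G`, with unit `η'` and counit `η⁻¹ ∘ (R ζ₁₁)`, where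
`ζ₁₁ = (ε' L) ∘ (L' G η) : L' ∘ G ⟶ L`: these satisfy the triangle identities. -/
theorem stmt2 {A B B' : Type*} [Category A] [Category B] [Category B']
    (L : B ⥤ A) (R : A ⥤ B) (adj : L ⊣ R)
    (L' : B' ⥤ A) (R' : A ⥤ B') (adj' : L' ⊣ R')
    (G : B ⥤ B') (h : R ⋙ G = R')
    [IsIso adj.unit]
    (ζ₁₁ : G ⋙ L' ⟶ L)
    (hζ : ∀ X : B, ζ₁₁.app X =
      L'.map (G.map (adj.unit.app X)) ≫
        eqToHom (congrArg L'.obj (Functor.congr_obj h (L.obj X))) ≫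
        adj'.counit.app (L.obj X))
    (u : 𝟭 B' ⟶ (L' ⋙ R) ⋙ G)
    (hu : ∀ Y : B', u.app Y =
      adj'.unit.app Y ≫ eqToHom (Functor.congr_obj h (L'.obj Y)).symm)
    (c : G ⋙ (L' ⋙ R) ⟶ 𝟭 B)
    (hc : ∀ X : B, c.app X = R.map (ζ₁₁.app X) ≫ (inv adj.unit).app X) :
    (∀ Y : B', (L' ⋙ R).map (u.app Y) ≫ c.app ((L' ⋙ R).obj Y) = 𝟙 ((L' ⋙ R).obj Y)) ∧
    (∀ X : B, u.app (G.obj X) ≫ G.map (c.app X) = 𝟙 (G.obj X)) :=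
  stmt2_general adj adj' (eqToIso h) ζ₁₁ (by simpa [eqToHom_map] using hζ) u
    (by simpa using hu) c hc
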